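/- Let H be a real Hilbert space, d ≥ 1 an integer, C ⊆ H a nonempty closed convex set with ‖x − y‖ ≤ d for all x, y ∈ C, T : C → C nonexpansive with Fix(T) ≠ ∅, and G : C → C a τ-contraction (0 ≤ τ < 1). Let (λ_n) ⊆ (0,1], h : ℕ → ℕ⁺ with λ_n ≥ 1/h(n) for all n, and χ : ℕ → ℕ with λ_i ≤ 1/(n+1) for all n ∈ ℕ and all i ≥ χ(n). Suppose moreover φ₁ : (0,∞) → ℕ satisfies Σ_{i=1}^{φ₁(x)} λ_i ≥ x for all real x > 0, and φ₂ : (0,∞) → ℕ satisfies |λ_n − λ_{n+1}|/λ_{n+1}² ≤ δ for all δ > 0 and all n ≥ φ₂(δ). Let u₀ ∈ C and u_{n+1} := (1−λ_{n+1})·T(u_n) + λ_{n+1}·G(T(u_n)). Then for every ε ∈ (0,1] and every g : ℕ → ℕ there exists n ≤ Ξ(ε/6, g_c, χ, h, d, τ) + c such that ‖u_i − u_j‖ ≤ ε for all i, j ∈ [n; n + g(n)], where c := φ₁((φ₂((1−τ)²ε/(6d)) + ln(6d/ε))/(1−τ)) and g_c(m) := m + c + g(m + c). -/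

import Mathlib

open scoped RealInnerProductSpace

/-- `fM f n = max {f i : 1 ≤ i ≤ n}`. -/
def fM (f : ℕ → ℕ) (n : ℕ) : ℕ := (Finset.Icc 1 n).sup f

/-- `ftilde d f n = max {fᴹ(16·d·n²), 16·d·n²}`. -/
def ftilde (d : ℕ) (f : ℕ → ℕ) (n : ℕ) : ℕ := max (fM f (16 * d * n ^ 2)) (16 * d * n ^ 2)

/-- `fIt d nε f i = f̃^(nε^i)`, the `nε^i`-fold iterate of `f̃`. -/
def fIt (d nε : ℕ) (f : ℕ → ℕ) (i : ℕ) (k : ℕ) : ℕ := (ftilde d f)^[nε ^ i] k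

/-- `ftildeI d nε f i n = max {fᵢᴹ(16·d·n²), 16·d·n²}`. -/
def ftildeI (d nε : ℕ) (f : ℕ → ℕ) (i : ℕ) (n : ℕ) : ℕ :=
  max (fM (fIt d nε f i) (16 * d * n ^ 2)) (16 * d * n ^ 2)

/-- The recursively defined sequence `k₀ := f̃₀^(nε)(1)`, `k_{i+1} := f̃ᵢ^(nε)(kᵢ)`. -/
def kSeq (d nε : ℕ) (f : ℕ → ℕ) : ℕ → ℕ
  | 0 => (ftildeI d nε f 0)^[nε] 1
  | (i + 1) => (ftildeI d nε f i)^[nε] (kSeq d nε f i)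

/-- `Kdef d τ ε̃ f = k_{i₀}` where `n_ε̃ := ⌈8d⁴/ε̃⁴⌉` and `i₀` is the least `i`
with `τ^(i+1) ≤ ε̃/(6d²)`. -/
noncomputable def Kdef (d : ℕ) (τ εt : ℝ) (f : ℕ → ℕ) : ℕ :=
  kSeq d ⌈8 * (d : ℝ) ^ 4 / εt ^ 4⌉₊ f
    (sInf {i : ℕ | τ ^ (i + 1) ≤ εt / (6 * (d : ℝ) ^ 2)})

/-- `fM0 F n = max {F i : 0 ≤ i ≤ n}` (for functions on ℕ). -/
def fM0 (F : ℕ → ℕ) (n : ℕ) : ℕ := (Finset.range (n + 1)).sup F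

/-- `gTil g n = max {n, g n}`. -/
def gTil (g : ℕ → ℕ) (n : ℕ) : ℕ := max n (g n)

/-- The counterfunction majorant `f(n) := ⌈6d·hᴹ(g̃ᴹ(χ(d·n)))/((1−τ)(ε/2)²)⌉`. -/
noncomputable def fXi (ε τ : ℝ) (g χ h : ℕ → ℕ) (d : ℕ) (n : ℕ) : ℕ :=
  ⌈6 * (d : ℝ) * (fM0 h (fM0 (gTil g) (χ (d * n))) : ℝ) / ((1 - τ) * (ε / 2) ^ 2)⌉₊

/-- The quantity `K = k_{i₀}` occurring in the definition of `Ξ(ε, g, χ, h, d, τ)`,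
with `ε₁ := (1−τ)(ε/2)²/2`, `ε_d := ε₁²/(2d²)` and `ε̃ := ((1−τ)²/(6+8d))·ε_d`. -/
noncomputable def KXi (ε : ℝ) (g χ h : ℕ → ℕ) (d : ℕ) (τ : ℝ) : ℕ :=
  Kdef d τ ((1 - τ) ^ 2 / (6 + 8 * (d : ℝ)) *
    (((1 - τ) * (ε / 2) ^ 2 / 2) ^ 2 / (2 * (d : ℝ) ^ 2))) (fXi ε τ g χ h d)

/-- The rate of metastability `Ξ(ε, g, χ, h, d, τ) := χ(d·k_{i₀})`. -/
noncomputable def XiDef (ε : ℝ) (g χ h : ℕ → ℕ) (d : ℕ) (τ : ℝ) : ℕ :=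
  χ (d * KXi ε g χ h d τ)

section aux
variable {H : Type*} [NormedAddCommGroup H] [InnerProductSpace ℝ H]

theorem aux_fix [CompleteSpace H] {C : Set H} (hne : C.Nonempty) (hcl : IsClosed C)
    (S : H → H) (hS : Set.MapsTo S C C) (K : ℝ) (hK0 : 0 ≤ K) (hK : K < 1)
    (hc : ∀ x ∈ C, ∀ y ∈ C, ‖S x - S y‖ ≤ K * ‖x - y‖) : ∃ z ∈ C, z = S z := by
  obtain ⟨x, hx⟩ := hne
  have hcon : ContractingWith ⟨K, hK0⟩ (hS.restrict S C C) := by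
    refine ⟨by exact_mod_cast hK, LipschitzWith.of_dist_le_mul ?_⟩
    rintro ⟨a, ha⟩ ⟨b, hb⟩
    have := hc a ha b hb
    rw [Subtype.dist_eq, Subtype.dist_eq, dist_eq_norm, dist_eq_norm]
    exact this
  obtain ⟨y, hy, hfy, -⟩ := ContractingWith.exists_fixedPoint' hcl.isComplete hS hcon hx
    (edist_ne_top _ _)
  exact ⟨y, hy, hfy.symm⟩

theorem aux_cvx {C : Set H} (hcv : Convex ℝ C) {t : ℝ} (ht0 : 0 < t) (ht1 : t ≤ 1) {a b : H}
    (ha : a ∈ C) (hb : b ∈ C) : (1 - t) • a + t • b ∈ C :=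
  hcv ha hb (by linarith) ht0.le (by ring)

theorem aux_diff (t : ℝ) (ht0 : 0 < t) (ht1 : t ≤ 1) (a b a' b' : H) :
    ‖((1 - t) • a + t • b) - ((1 - t) • a' + t • b')‖ ≤ (1 - t) * ‖a - a'‖ + t * ‖b - b'‖ := by
  have : ((1 - t) • a + t • b) - ((1 - t) • a' + t • b')
      = (1 - t) • (a - a') + t • (b - b') := by module
  rw [this]
  refine (norm_add_le _ _).trans ?_
  rw [norm_smul, norm_smul, Real.norm_of_nonneg ht0.le,
    Real.norm_of_nonneg (by linarith : (0 : ℝ) ≤ 1 - t)]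

theorem aux_mono {t s : ℝ} (hs0 : 0 < s) (hst : s < t) (ht1 : t ≤ 1) (a b Ta Tb w : H)
    (hab : ‖Ta - Tb‖ ≤ ‖a - b‖)
    (ha : a = (1 - t) • Ta + t • w) (hb : b = (1 - s) • Tb + s • w) :
    ‖b - a‖ ^ 2 ≤ ‖b - w‖ ^ 2 - ‖a - w‖ ^ 2 := by
  have key : (⟪a - b, a - w⟫ : ℝ) ≤ 0 := by
    have h1 : (1 - t) • (a - Ta) = t • (w - a) := by
      have : (1 - t) • (a - Ta) - t • (w - a) = a - ((1 - t) • Ta + t • w) := by module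
      rw [← sub_eq_zero, this, ← ha, sub_self]
    have h2 : (1 - s) • (b - Tb) = s • (w - b) := by
      have : (1 - s) • (b - Tb) - s • (w - b) = b - ((1 - s) • Tb + s • w) := by module
      rw [← sub_eq_zero, this, ← hb, sub_self]
    have h3 : 0 ≤ (⟪a - b, (a - Ta) - (b - Tb)⟫ : ℝ) := by
      have e : (a - Ta) - (b - Tb) = (a - b) - (Ta - Tb) := by abel
      rw [e, inner_sub_right, real_inner_self_eq_norm_sq]
      have := real_inner_le_norm (a - b) (Ta - Tb)
      nlinarith [norm_nonneg (a - b)]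
    have h4 : ((1 - t) * (1 - s)) • ((a - Ta) - (b - Tb)) =
        -(((1 - t) * s) • (a - b) + (t - s) • (a - w)) := by
      have : ((1 - t) * (1 - s)) • ((a - Ta) - (b - Tb)) =
        (1 - s) • ((1 - t) • (a - Ta)) - (1 - t) • ((1 - s) • (b - Tb)) := by module
      rw [this, h1, h2]
      module
    have h5 : 0 ≤ (⟪a - b, ((1 - t) * (1 - s)) • ((a - Ta) - (b - Tb))⟫ : ℝ) := by
      rw [inner_smul_right]
      exact mul_nonneg (mul_nonneg (by linarith) (by linarith)) h3
    rw [h4, inner_neg_right, inner_add_right, inner_smul_right, inner_smul_right,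
      real_inner_self_eq_norm_sq] at h5
    have h6 : 0 ≤ (1 - t) * s * ‖a - b‖ ^ 2 :=
      mul_nonneg (mul_nonneg (by linarith) hs0.le) (sq_nonneg _)
    by_contra hcon
    push Not at hcon
    have := mul_pos (by linarith : 0 < t - s) hcon
    linarith
  have e : b - w = (a - w) - (a - b) := by abel
  rw [e, norm_sub_sq_real (a - w) (a - b), norm_sub_rev b a, real_inner_comm]
  linarith

theorem aux_iter_le {F : ℕ → ℕ} (hF : ∀ k, k ≤ F k) (k a : ℕ) : k ≤ F^[a] k := by
  induction a with
  | zero => simp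
  | succ a ih => rw [Function.iterate_succ_apply']; exact ih.trans (hF _)

theorem aux_iter_mono {F : ℕ → ℕ} (hF : ∀ k, k ≤ F k) (k : ℕ) {a b : ℕ} (hab : a ≤ b) :
    F^[a] k ≤ F^[b] k := by
  obtain ⟨c, rfl⟩ := Nat.exists_eq_add_of_le hab
  rw [add_comm, Function.iterate_add_apply]
  exact aux_iter_le hF _ _

theorem aux_pigeon (a : ℕ → ℝ) (D η : ℝ) (N : ℕ) (h0 : 0 ≤ a 0) (hN : a N ≤ D)
    (hNη : D ≤ N * η) (hN1 : 1 ≤ N) : ∃ i < N, a (i + 1) - a i ≤ η := by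
  by_contra hcon
  push Not at hcon
  have : (∑ i ∈ Finset.range N, η) < ∑ i ∈ Finset.range N, (a (i + 1) - a i) := by
    apply Finset.sum_lt_sum_of_nonempty
    · simp; omega
    · intro i hi; exact hcon i (Finset.mem_range.1 hi)
  rw [Finset.sum_range_sub] at this
  simp at this
  linarith

/-- one level -/
theorem aux_level (d : ℕ) (C : Set H)
    (hbd : ∀ x ∈ C, ∀ y ∈ C, ‖x - y‖ ≤ (d : ℝ))
    (T : H → H) (hT : ∀ x ∈ C, ∀ y ∈ C, ‖T x - T y‖ ≤ ‖x - y‖)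
    (z : ℝ → H) (w : H) (hw : w ∈ C) (hz : ∀ t, 0 < t → t ≤ 1 → z t ∈ C)
    (hze : ∀ t, 0 < t → t ≤ 1 → z t = (1 - t) • T (z t) + t • w)
    (F : ℕ → ℕ) (hF : ∀ k, k ≤ F k) (η : ℝ) (hη : 0 < η) (N : ℕ) (hN1 : 1 ≤ N)
    (hN : (d : ℝ) ^ 2 ≤ N * η ^ 2) (k0 : ℕ) (hk0 : 1 ≤ k0) :
    ∃ k, k0 ≤ k ∧ F k ≤ F^[N] k0 ∧
      ∀ t s : ℝ, 1 / (F k : ℝ) ≤ t → t ≤ 1 / (k : ℝ) → 1 / (F k : ℝ) ≤ s → s ≤ 1 / (k : ℝ) →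
        ‖z t - z s‖ ≤ η := by
  have hm : ∀ s t : ℝ, 0 < s → s ≤ t → t ≤ 1 →
      ‖z s - z t‖ ^ 2 ≤ ‖z s - w‖ ^ 2 - ‖z t - w‖ ^ 2 := by
    intro s t hs hst ht
    rcases hst.eq_or_lt with rfl | hlt
    · simp
    · exact aux_mono hs hlt ht _ _ _ _ w
        (hT _ (hz t (hs.trans hlt) ht) _ (hz s hs (hst.trans ht)))
        (hze t (hs.trans hlt) ht) (hze s hs (hst.trans ht))
  have hpos : ∀ k : ℕ, 1 ≤ k → (0 : ℝ) < 1 / (k : ℝ) ∧ 1 / (k : ℝ) ≤ 1 := by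
    intro k hk
    have : (1 : ℝ) ≤ k := by exact_mod_cast hk
    exact ⟨by positivity, by rw [div_le_one (by linarith)]; exact this⟩
  have hk : ∀ i, 1 ≤ F^[i] k0 := fun i => hk0.trans (aux_iter_le hF _ _)
  obtain ⟨i, hi, hi2⟩ := aux_pigeon (fun i => ‖z (1 / ((F^[i] k0 : ℕ) : ℝ)) - w‖ ^ 2)
    ((d : ℝ) ^ 2) (η ^ 2) N (by positivity)
    (by
      have h1 := hpos _ (hk N)
      have := hbd _ (hz _ h1.1 h1.2) w hw
      exact pow_le_pow_left₀ (norm_nonneg _) this 2) hN hN1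
  refine ⟨F^[i] k0, aux_iter_le hF _ _, ?_, ?_⟩
  · rw [← Function.iterate_succ_apply' F]; exact aux_iter_mono hF _ hi
  · simp only [Function.iterate_succ_apply'] at hi2
    set k := F^[i] k0 with hkdef
    have hk1 : 1 ≤ k := hk i
    have p1 := hpos k hk1
    have p2 := hpos (F k) (hk1.trans (hF k))
    have main : ∀ t s : ℝ, 1 / (F k : ℝ) ≤ s → s ≤ t → t ≤ 1 / (k : ℝ) → ‖z s - z t‖ ≤ η := by
      intro t s h1 h2 h3
      have hs : 0 < s := p2.1.trans_le h1
      have a1 := hm s t hs h2 (h3.trans p1.2)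
      have a2 := hm _ s p2.1 h1 (h2.trans (h3.trans p1.2))
      have a3 := hm t _ (hs.trans_le h2) h3 p1.2
      have b1 := sq_nonneg ‖z (1 / (F k : ℝ)) - z s‖
      have b2 := sq_nonneg ‖z t - z (1 / (k : ℝ))‖
      have : ‖z s - z t‖ ^ 2 ≤ η ^ 2 := by linarith
      exact (pow_le_pow_iff_left₀ (norm_nonneg _) hη.le two_ne_zero).1 this
    intro t s h1 h2 h3 h4
    rcases le_total s t with h | h
    · rw [norm_sub_rev]; exact main t s h3 h h2
    · exact main s t h1 h h4

/-- nested levels -/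
theorem aux_nested [CompleteSpace H] (d : ℕ) (C : Set H)
    (hne : C.Nonempty) (hcl : IsClosed C) (hcv : Convex ℝ C)
    (hbd : ∀ x ∈ C, ∀ y ∈ C, ‖x - y‖ ≤ (d : ℝ))
    (T : H → H) (hTm : Set.MapsTo T C C)
    (hT : ∀ x ∈ C, ∀ y ∈ C, ‖T x - T y‖ ≤ ‖x - y‖)
    (τ : ℝ) (hτ0 : 0 ≤ τ)
    (G : H → H) (hGm : Set.MapsTo G C C)
    (hG : ∀ x ∈ C, ∀ y ∈ C, ‖G x - G y‖ ≤ τ * ‖x - y‖)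
    (v : ℝ → H) (hv : ∀ t, 0 < t → t ≤ 1 → v t ∈ C)
    (hve : ∀ t, 0 < t → t ≤ 1 → v t = (1 - t) • T (v t) + t • G (T (v t)))
    (η : ℝ) (hη : 0 < η) (N : ℕ) (hN1 : 1 ≤ N)
    (hN : (d : ℝ) ^ 2 ≤ N * η ^ 2) (E : ℕ → ℝ) (hE0 : E 0 = d)
    (hE : ∀ j, E (j + 1) = τ * E j + η) (J : ℕ) :
    ∀ (F : ℕ → ℕ), (∀ k, k ≤ F k) → ∃ k, 1 ≤ k ∧ F k ≤ F^[N ^ J] 1 ∧ ∃ w ∈ C,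
      ∀ t : ℝ, 1 / (F k : ℝ) ≤ t → t ≤ 1 / (k : ℝ) → ‖w - v t‖ ≤ E J := by
  induction J with
  | zero =>
    intro F hF
    obtain ⟨w, hw⟩ := hne
    refine ⟨1, le_rfl, by simp, w, hw, ?_⟩
    intro t h1 h2
    have : (0 : ℝ) < F 1 := by exact_mod_cast (hF 1)
    rw [hE0]
    refine hbd _ hw _ (hv _ (lt_of_lt_of_le (by positivity) h1) (by simpa using h2))
  | succ J ih =>
    intro F hF
    obtain ⟨k', hk', hFk', w', hw', hww⟩ := ih (F^[N]) (fun k => aux_iter_le hF _ _)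
    have hgw : G (T w') ∈ C := hGm (hTm hw')
    have hzex : ∀ t : ℝ, ∃ y : H, 0 < t → t ≤ 1 →
        y ∈ C ∧ y = (1 - t) • T y + t • G (T w') := by
      intro t
      by_cases ht : 0 < t ∧ t ≤ 1
      · obtain ⟨y, hy, hye⟩ := aux_fix hne hcl (fun y => (1 - t) • T y + t • G (T w'))
          (fun y hy => aux_cvx hcv ht.1 ht.2 (hTm hy) hgw) (1 - t) (by linarith [ht.2])
          (by linarith [ht.1]) (by
            intro x hx y hy
            refine (aux_diff t ht.1 ht.2 _ _ _ _).trans ?_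
            simp only [sub_self, norm_zero, mul_zero, add_zero]
            exact mul_le_mul_of_nonneg_left (hT x hx y hy) (by linarith [ht.2]))
        exact ⟨y, fun _ _ => ⟨hy, hye⟩⟩
      · exact ⟨0, fun h1 h2 => absurd ⟨h1, h2⟩ ht⟩
    choose z hz using hzex
    obtain ⟨k, hkk, hFk, hst⟩ := aux_level d C hbd T hT z (G (T w')) hgw
      (fun t h1 h2 => (hz t h1 h2).1) (fun t h1 h2 => (hz t h1 h2).2) F hF η hη N hN1 hN k' hk'
    have hk1 : 1 ≤ k := hk'.trans hkk
    have hkR : (1 : ℝ) ≤ k := by exact_mod_cast hk1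
    have hFR : (k : ℝ) ≤ F k := by exact_mod_cast hF k
    have hFR2 : (F k : ℝ) ≤ (F^[N] k' : ℕ) := by exact_mod_cast hFk
    have hk'R : (k' : ℝ) ≤ k := by exact_mod_cast hkk
    have hk'1 : (1 : ℝ) ≤ k' := by exact_mod_cast hk'
    have hkle : 1 / (k : ℝ) ≤ 1 := by rw [div_le_one (by linarith)]; exact hkR
    have hkF : 1 / (F k : ℝ) ≤ 1 / (k : ℝ) := one_div_le_one_div_of_le (by linarith) hFR
    refine ⟨k, hk1, ?_, z (1 / (k : ℝ)), (hz _ (by positivity) hkle).1, ?_⟩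
    · refine hFk.trans (hFk'.trans ?_)
      rw [← Function.iterate_mul, pow_succ, mul_comm]
    · intro t h1 h2
      have ht0 : 0 < t := lt_of_lt_of_le (one_div_pos.2 (by linarith)) h1
      have ht1 : t ≤ 1 := h2.trans hkle
      have q1 := hst (1 / (k : ℝ)) t hkF le_rfl h1 h2
      have q2 : ‖w' - v t‖ ≤ E J := by
        refine hww t (le_trans ?_ h1) (h2.trans ?_)
        · exact one_div_le_one_div_of_le (by linarith) hFR2
        · exact one_div_le_one_div_of_le (by linarith) hk'R
      obtain ⟨hz1, hz2⟩ := hz t ht0 ht1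
      have hv1 := hv t ht0 ht1
      have q3 : ‖z t - v t‖ ≤ τ * E J := by
        have r1 : ‖z t - v t‖ ≤ (1 - t) * ‖T (z t) - T (v t)‖ +
            t * ‖G (T w') - G (T (v t))‖ := by
          conv_lhs => rw [hz2, hve t ht0 ht1]
          exact aux_diff t ht0 ht1 _ _ _ _
        have r2 := hT _ hz1 _ hv1
        have r3 : ‖G (T w') - G (T (v t))‖ ≤ τ * E J :=
          (hG _ (hTm hw') _ (hTm hv1)).trans
            (mul_le_mul_of_nonneg_left ((hT _ hw' _ hv1).trans q2) hτ0)
        have r4 := mul_le_mul_of_nonneg_left r2 (by linarith : 0 ≤ 1 - t)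
        have r5 := mul_le_mul_of_nonneg_left r3 ht0.le
        have : t * ‖z t - v t‖ ≤ t * (τ * E J) := by linarith
        exact le_of_mul_le_mul_left this ht0
      have : z (1 / (k : ℝ)) - v t = (z (1 / (k : ℝ)) - z t) + (z t - v t) := by abel
      rw [this, hE]
      exact (norm_add_le _ _).trans (by linarith)

end aux

theorem aux_le_fM (f : ℕ → ℕ) {i n : ℕ} (h1 : 1 ≤ i) (h2 : i ≤ n) : f i ≤ fM f n :=
  Finset.le_sup (f := f) (Finset.mem_Icc.2 ⟨h1, h2⟩)

theorem aux_le_fM0 (f : ℕ → ℕ) {i n : ℕ} (h2 : i ≤ n) : f i ≤ fM0 f n :=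
  Finset.le_sup (f := f) (Finset.mem_range.2 (by omega))

theorem aux_fM_mono (f : ℕ → ℕ) {m n : ℕ} (h : m ≤ n) : fM f m ≤ fM f n :=
  Finset.sup_mono (Finset.Icc_subset_Icc_right h)

theorem aux_sq (d : ℕ) (hd : 1 ≤ d) (n : ℕ) : n ≤ 16 * d * n ^ 2 := by
  rcases Nat.eq_zero_or_pos n with rfl | hn
  · simp
  · nlinarith [Nat.mul_le_mul hd (Nat.le_self_pow two_ne_zero n)]

theorem aux_ftilde_ge (d : ℕ) (hd : 1 ≤ d) (f : ℕ → ℕ) (n : ℕ) : n ≤ ftilde d f n :=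
  (aux_sq d hd n).trans (le_max_right _ _)

theorem aux_f_le_ftilde (d : ℕ) (hd : 1 ≤ d) (f : ℕ → ℕ) (n : ℕ) (hn : 1 ≤ n) :
    f n ≤ ftilde d f n :=
  (aux_le_fM f hn (aux_sq d hd n)).trans (le_max_left _ _)

theorem aux_ftilde_mono (d : ℕ) (f : ℕ → ℕ) : Monotone (ftilde d f) := by
  intro a b hab
  have : 16 * d * a ^ 2 ≤ 16 * d * b ^ 2 := by gcongr
  exact max_le_max (aux_fM_mono f this) this

theorem aux_ftildeI_ge (d : ℕ) (hd : 1 ≤ d) (n : ℕ) (f : ℕ → ℕ) (i k : ℕ) :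
    k ≤ ftildeI d n f i k := (aux_sq d hd k).trans (le_max_right _ _)

theorem aux_fIt_le (d : ℕ) (hd : 1 ≤ d) (n : ℕ) (f : ℕ → ℕ) (i k : ℕ) (hk : 1 ≤ k) :
    fIt d n f i k ≤ ftildeI d n f i k :=
  (aux_le_fM (fIt d n f i) hk (aux_sq d hd k)).trans (le_max_left _ _)

theorem aux_fIt_iter (d : ℕ) (hd : 1 ≤ d) (n : ℕ) (f : ℕ → ℕ) (i k : ℕ) (hk : 1 ≤ k) (m : ℕ) :
    (ftilde d f)^[n ^ i * m] k ≤ (ftildeI d n f i)^[m] k := by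
  induction m with
  | zero => simp
  | succ m ih =>
    rw [Function.iterate_succ_apply', Nat.mul_succ, add_comm, Function.iterate_add_apply]
    refine le_trans ((aux_ftilde_mono d f).iterate _ ih) ?_
    exact aux_fIt_le d hd n f i _ (hk.trans (aux_iter_le (aux_ftildeI_ge d hd n f i) _ _))

theorem aux_kSeq_pos (d : ℕ) (hd : 1 ≤ d) (n : ℕ) (f : ℕ → ℕ) (i : ℕ) : 1 ≤ kSeq d n f i := by
  induction i with
  | zero => exact aux_iter_le (aux_ftildeI_ge d hd n f 0) _ _
  | succ i ih => exact ih.trans (aux_iter_le (aux_ftildeI_ge d hd n f i) _ _)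

theorem aux_kSeq (d : ℕ) (hd : 1 ≤ d) (n N : ℕ) (hN1 : 1 ≤ N) (hNn : N ^ 2 ≤ n)
    (f : ℕ → ℕ) (i : ℕ) : (ftilde d f)^[N ^ (i + 1)] 1 ≤ kSeq d n f i := by
  have hF := aux_ftilde_ge d hd f
  cases i with
  | zero =>
    refine le_trans ?_ (aux_fIt_iter d hd n f 0 1 le_rfl n)
    refine aux_iter_mono hF _ ?_
    simp only [zero_add, pow_one, pow_zero, one_mul]
    nlinarith
  | succ i =>
    refine le_trans ?_ (aux_fIt_iter d hd n f i _ (aux_kSeq_pos d hd n f i) n)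
    refine le_trans ((aux_ftilde_mono d f).iterate _ (aux_kSeq_pos d hd n f i)) ?_
    refine aux_iter_mono hF _ ?_
    calc N ^ (i + 1 + 1) ≤ N ^ (2 * (i + 1)) := Nat.pow_le_pow_right hN1 (by omega)
      _ = (N ^ 2) ^ (i + 1) := by rw [pow_mul]
      _ ≤ n ^ (i + 1) := Nat.pow_le_pow_left hNn _
      _ = n ^ i * n := pow_succ _ _

/-- arithmetic -/
theorem aux_arith (d : ℕ) (hd : 1 ≤ d) (τ e εt : ℝ) (hτ0 : 0 ≤ τ) (hτ1 : τ < 1)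
    (he0 : 0 < e) (he1 : e ≤ 1)
    (hεt : εt = (1 - τ) ^ 2 / (6 + 8 * (d : ℝ)) *
      (((1 - τ) * (e / 2) ^ 2 / 2) ^ 2 / (2 * (d : ℝ) ^ 2))) :
    0 < εt ∧ εt ≤ e ∧
    ⌈(d : ℝ) ^ 2 / ((1 - τ) * e / 2) ^ 2⌉₊ ^ 2 ≤ ⌈8 * (d : ℝ) ^ 4 / εt ^ 4⌉₊ := by
  have hdR : (1 : ℝ) ≤ d := by exact_mod_cast hd
  have hs0 : 0 < 1 - τ := by linarith
  have hpos : 0 < εt := by rw [hεt]; positivity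
  set y := (1 - τ) * e with hy
  have hy0 : 0 < y := by positivity
  have hye : y ≤ e := by rw [hy]; nlinarith
  have hy1 : y ≤ 1 := hye.trans he1
  have hle : εt ≤ y / 1000 := by
    have e1 : εt = y ^ 4 / (128 * d ^ 2 * (6 + 8 * d)) := by
      rw [hεt, hy]; field_simp; ring
    rw [e1]
    have h4 : y ^ 4 ≤ y := by
      calc y ^ 4 ≤ y ^ 1 := pow_le_pow_of_le_one hy0.le hy1 (by norm_num)
        _ = y := pow_one y
    have h5 : (1000 : ℝ) ≤ 128 * d ^ 2 * (6 + 8 * d) := by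
      have : (1 : ℝ) ≤ (d : ℝ) ^ 2 := one_le_pow₀ hdR
      nlinarith
    exact div_le_div₀ hy0.le h4 (by norm_num) h5
  refine ⟨hpos, by linarith, ?_⟩
  have hx1 : 1 ≤ (d : ℝ) / y := by rw [le_div_iff₀ hy0]; linarith
  set x := (d : ℝ) / y with hx
  have hN : (⌈(d : ℝ) ^ 2 / (y / 2) ^ 2⌉₊ : ℝ) ≤ 5 * x ^ 2 := by
    have e2 : (d : ℝ) ^ 2 / (y / 2) ^ 2 = 4 * x ^ 2 := by rw [hx]; field_simp; ring
    rw [e2]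
    have := (Nat.ceil_lt_add_one (by positivity : 0 ≤ 4 * x ^ 2)).le
    have : (1 : ℝ) ≤ x ^ 2 := one_le_pow₀ hx1
    linarith
  have h8 : 25 * x ^ 4 ≤ 8 * (d : ℝ) ^ 4 / εt ^ 4 := by
    have h1 : εt ^ 4 ≤ (y / 1000) ^ 4 := pow_le_pow_left₀ hpos.le hle 4
    have h2 : 8 * (d : ℝ) ^ 4 / (y / 1000) ^ 4 ≤ 8 * (d : ℝ) ^ 4 / εt ^ 4 :=
      div_le_div_of_nonneg_left (by positivity) (by positivity) h1
    refine le_trans ?_ h2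
    have : 8 * (d : ℝ) ^ 4 / (y / 1000) ^ 4 = 8 * 1000 ^ 4 * x ^ 4 := by
      rw [hx]; field_simp
    rw [this]
    have : 0 ≤ x ^ 4 := by positivity
    nlinarith
  have hfin : ((⌈(d : ℝ) ^ 2 / (y / 2) ^ 2⌉₊ ^ 2 : ℕ) : ℝ) ≤ (⌈8 * (d : ℝ) ^ 4 / εt ^ 4⌉₊ : ℝ) := by
    push_cast
    calc ((⌈(d : ℝ) ^ 2 / (y / 2) ^ 2⌉₊ : ℝ)) ^ 2 ≤ (5 * x ^ 2) ^ 2 :=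
          pow_le_pow_left₀ (by positivity) hN 2
      _ = 25 * x ^ 4 := by ring
      _ ≤ _ := h8.trans (Nat.le_ceil _)
  exact_mod_cast hfin

/-- closeness of an abstract real recursion -/
theorem aux_rec (s lam : ℕ → ℝ) (hlam : ∀ n, lam n ∈ Set.Ioc (0 : ℝ) 1) (τ : ℝ)
    (hτ0 : 0 ≤ τ) (hτ1 : τ < 1) (D b : ℝ) (hD : 0 < D) (hb : 0 < b) (hbD : b < D)
    (hs : ∀ n, s n ≤ D) (N c : ℕ)
    (hrec : ∀ n ≥ N, s (n + 1) ≤ (1 - lam (n + 1) * (1 - τ)) * s n + lam (n + 1) * (1 - τ) * b)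
    (hc : ((N : ℝ) + Real.log (D / b)) / (1 - τ) ≤ ∑ i ∈ Finset.Icc 1 c, lam i) :
    ∀ n ≥ c, s n ≤ 2 * b := by
  have h1τ : 0 < 1 - τ := by linarith
  have hlog : 0 < Real.log (D / b) := Real.log_pos (by rw [lt_div_iff₀ hb]; linarith)
  have hsum_le : ∀ m : ℕ, ∑ i ∈ Finset.Icc 1 m, lam i ≤ m := by
    intro m
    calc ∑ i ∈ Finset.Icc 1 m, lam i ≤ ∑ i ∈ Finset.Icc 1 m, (1 : ℝ) :=
          Finset.sum_le_sum (fun i _ => (hlam i).2)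
      _ = m := by simp
  rw [div_le_iff₀ h1τ] at hc
  have hNc : N ≤ c := by
    have h2 := hsum_le c
    have h3 : (0 : ℝ) ≤ c := Nat.cast_nonneg c
    have : (N : ℝ) ≤ c := by nlinarith
    exact_mod_cast this
  have key : ∀ m ≥ N, s m ≤ b + D * Real.exp (-((1 - τ) *
      (∑ i ∈ Finset.Icc 1 m, lam i - N))) := by
    intro m hm
    induction m, hm using Nat.le_induction with
    | base =>
      have : 1 ≤ Real.exp (-((1 - τ) * (∑ i ∈ Finset.Icc 1 N, lam i - N))) := by
        apply Real.one_le_exp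
        have := hsum_le N
        nlinarith
      have := hs N
      nlinarith
    | succ m hm ih =>
      have h1 := hrec m hm
      have hl := hlam (m + 1)
      have ha1 : 0 ≤ 1 - lam (m + 1) * (1 - τ) := by nlinarith [hl.1, hl.2]
      have h2 := mul_le_mul_of_nonneg_left ih ha1
      have h3 : 1 - lam (m + 1) * (1 - τ) ≤ Real.exp (-(lam (m + 1) * (1 - τ))) := by
        have := Real.add_one_le_exp (-(lam (m + 1) * (1 - τ)))
        linarith
      rw [Finset.sum_Icc_succ_top (by omega)]
      have e : -((1 - τ) * (∑ i ∈ Finset.Icc 1 m, lam i + lam (m + 1) - N)) =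
        -((1 - τ) * (∑ i ∈ Finset.Icc 1 m, lam i - N)) + -(lam (m + 1) * (1 - τ)) := by ring
      rw [e, Real.exp_add]
      have h4 : 0 ≤ D * Real.exp (-((1 - τ) * (∑ i ∈ Finset.Icc 1 m, lam i - N))) := by positivity
      have h5 := mul_le_mul_of_nonneg_left h3 h4
      nlinarith
  intro n hn
  refine (key n (hNc.trans hn)).trans ?_
  have hmono : ∑ i ∈ Finset.Icc 1 c, lam i ≤ ∑ i ∈ Finset.Icc 1 n, lam i :=
    Finset.sum_le_sum_of_subset_of_nonneg (Finset.Icc_subset_Icc_right hn)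
      (fun i _ _ => (hlam i).1.le)
  have : Real.exp (-((1 - τ) * (∑ i ∈ Finset.Icc 1 n, lam i - N))) ≤
      Real.exp (-Real.log (D / b)) := by
    apply Real.exp_le_exp.2
    have hN0 : (0 : ℝ) ≤ N := Nat.cast_nonneg N
    nlinarith
  rw [Real.exp_neg (Real.log (D / b)), Real.exp_log (by positivity), inv_div] at this
  have h6 := mul_le_mul_of_nonneg_left this hD.le
  rw [mul_div_cancel₀ _ hD.ne'] at h6
  linarith


/-- Rate of metastability for the hybrid steepest descent iteration
`u_{n+1} = (1−λ_{n+1})·T(u_n) + λ_{n+1}·G(T(u_n))` (single nonexpansive mapping). -/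
theorem hsdm_single_metastable
    {H : Type*} [NormedAddCommGroup H] [InnerProductSpace ℝ H] [CompleteSpace H]
    (d : ℕ) (hd : 1 ≤ d)
    (C : Set H) (hne : C.Nonempty) (hcl : IsClosed C) (hcv : Convex ℝ C)
    (hbd : ∀ x ∈ C, ∀ y ∈ C, ‖x - y‖ ≤ (d : ℝ))
    (T : H → H) (hTm : Set.MapsTo T C C)
    (hT : ∀ x ∈ C, ∀ y ∈ C, ‖T x - T y‖ ≤ ‖x - y‖)
    (hfix : ∃ p ∈ C, T p = p)
    (τ : ℝ) (hτ0 : 0 ≤ τ) (hτ1 : τ < 1)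
    (G : H → H) (hGm : Set.MapsTo G C C)
    (hG : ∀ x ∈ C, ∀ y ∈ C, ‖G x - G y‖ ≤ τ * ‖x - y‖)
    (lam : ℕ → ℝ) (hlam : ∀ n, lam n ∈ Set.Ioc (0 : ℝ) 1)
    (h : ℕ → ℕ) (hh : ∀ n, 1 ≤ h n) (hlamh : ∀ n, 1 / (h n : ℝ) ≤ lam n)
    (χ : ℕ → ℕ) (hχ : ∀ n : ℕ, ∀ i ≥ χ n, lam i ≤ 1 / ((n : ℝ) + 1))
    (φ₁ : ℝ → ℕ) (hφ₁ : ∀ x : ℝ, 0 < x → x ≤ ∑ i ∈ Finset.Icc 1 (φ₁ x), lam i)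
    (φ₂ : ℝ → ℕ)
    (hφ₂ : ∀ δ : ℝ, 0 < δ → ∀ n ≥ φ₂ δ, |lam n - lam (n + 1)| / (lam (n + 1)) ^ 2 ≤ δ)
    (u : ℕ → H) (hu0 : u 0 ∈ C)
    (hrec : ∀ n, u (n + 1) = (1 - lam (n + 1)) • T (u n) + lam (n + 1) • G (T (u n)))
    (ε : ℝ) (hε : ε ∈ Set.Ioc (0 : ℝ) 1) (g : ℕ → ℕ) :
    ∃ n ≤ XiDef (ε / 6)
        (fun m => m +
          φ₁ ((↑(φ₂ ((1 - τ) ^ 2 * ε / (6 * (d : ℝ)))) + Real.log (6 * (d : ℝ) / ε)) /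
            (1 - τ)) +
          g (m +
            φ₁ ((↑(φ₂ ((1 - τ) ^ 2 * ε / (6 * (d : ℝ)))) + Real.log (6 * (d : ℝ) / ε)) /
              (1 - τ)))) χ h d τ +
        φ₁ ((↑(φ₂ ((1 - τ) ^ 2 * ε / (6 * (d : ℝ)))) + Real.log (6 * (d : ℝ) / ε)) /
          (1 - τ)),
      ∀ i ∈ Set.Icc n (n + g n), ∀ j ∈ Set.Icc n (n + g n), ‖u i - u j‖ ≤ ε := by
  have hdR : (1 : ℝ) ≤ d := by exact_mod_cast hd
  have h1τ : 0 < 1 - τ := by linarith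
  obtain ⟨hε0, hε1⟩ := hε
  generalize hNdef : φ₂ ((1 - τ) ^ 2 * ε / (6 * (d : ℝ))) = N2
  have hφ₂' := hφ₂ ((1 - τ) ^ 2 * ε / (6 * (d : ℝ))) (by positivity)
  rw [hNdef] at hφ₂'
  have hlogpos : 0 < Real.log (6 * (d : ℝ) / ε) :=
    Real.log_pos (by rw [lt_div_iff₀ hε0]; linarith)
  have hφ₁' := hφ₁ (((N2 : ℝ) + Real.log (6 * (d : ℝ) / ε)) / (1 - τ))
    (div_pos (by positivity) h1τ)
  generalize φ₁ (((N2 : ℝ) + Real.log (6 * (d : ℝ) / ε)) / (1 - τ)) = c at hφ₁' ⊢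
  -- the resolvent path
  have hvex : ∀ t : ℝ, ∃ y : H, 0 < t → t ≤ 1 →
      y ∈ C ∧ y = (1 - t) • T y + t • G (T y) := by
    intro t
    by_cases ht : 0 < t ∧ t ≤ 1
    · obtain ⟨y, hy, hye⟩ := aux_fix hne hcl (fun y => (1 - t) • T y + t • G (T y))
        (fun y hy => aux_cvx hcv ht.1 ht.2 (hTm hy) (hGm (hTm hy))) (1 - t * (1 - τ))
        (by nlinarith [ht.1, ht.2]) (by nlinarith [ht.1, ht.2]) (by
          intro x hx y hy
          refine (aux_diff t ht.1 ht.2 _ _ _ _).trans ?_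
          have r1 := hT x hx y hy
          have r2 : ‖G (T x) - G (T y)‖ ≤ τ * ‖x - y‖ :=
            (hG _ (hTm hx) _ (hTm hy)).trans (mul_le_mul_of_nonneg_left r1 hτ0)
          have r4 := mul_le_mul_of_nonneg_left r1 (by linarith [ht.2] : 0 ≤ 1 - t)
          have r5 := mul_le_mul_of_nonneg_left r2 ht.1.le
          nlinarith)
      exact ⟨y, fun _ _ => ⟨hy, hye⟩⟩
    · exact ⟨0, fun h1 h2 => absurd ⟨h1, h2⟩ ht⟩
  choose v hv using hvex
  have hvC : ∀ n, v (lam n) ∈ C := fun n => (hv _ (hlam n).1 (hlam n).2).1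
  have hvE : ∀ n, v (lam n) = (1 - lam n) • T (v (lam n)) + lam n • G (T (v (lam n))) :=
    fun n => (hv _ (hlam n).1 (hlam n).2).2
  have huC : ∀ n, u n ∈ C := by
    intro n
    induction n with
    | zero => exact hu0
    | succ n ih =>
      rw [hrec]
      exact aux_cvx hcv (hlam _).1 (hlam _).2 (hTm ih) (hGm (hTm ih))
  have hcontr : ∀ n, ∀ x ∈ C, ∀ y ∈ C,
      ‖((1 - lam n) • T x + lam n • G (T x)) - ((1 - lam n) • T y + lam n • G (T y))‖ ≤
        (1 - lam n * (1 - τ)) * ‖x - y‖ := by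
    intro n x hx y hy
    have ht := hlam n
    refine (aux_diff _ ht.1 ht.2 _ _ _ _).trans ?_
    have r1 := hT x hx y hy
    have r2 : ‖G (T x) - G (T y)‖ ≤ τ * ‖x - y‖ :=
      (hG _ (hTm hx) _ (hTm hy)).trans (mul_le_mul_of_nonneg_left r1 hτ0)
    have r4 := mul_le_mul_of_nonneg_left r1 (by linarith [ht.2] : 0 ≤ 1 - lam n)
    have r5 := mul_le_mul_of_nonneg_left r2 ht.1.le
    nlinarith
  have hclose : ∀ n ≥ c, ‖u n - v (lam n)‖ ≤ 2 * (ε / 6) := by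
    apply aux_rec (fun n => ‖u n - v (lam n)‖) lam hlam τ hτ0 hτ1 d (ε / 6) (by linarith)
      (by linarith) (by linarith) (fun n => hbd _ (huC n) _ (hvC n)) N2 c
    · intro n hn
      have hl := hlam (n + 1)
      have h1 : ‖u (n + 1) - v (lam (n + 1))‖ ≤
          (1 - lam (n + 1) * (1 - τ)) * ‖u n - v (lam (n + 1))‖ := by
        conv_lhs => rw [hrec, hvE (n + 1)]
        exact hcontr (n + 1) _ (huC n) _ (hvC _)
      have h2 : lam (n + 1) * (1 - τ) * ‖v (lam n) - v (lam (n + 1))‖ ≤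
          |lam n - lam (n + 1)| * d := by
        have e : v (lam n) - v (lam (n + 1)) =
          (((1 - lam (n + 1)) • T (v (lam n)) + lam (n + 1) • G (T (v (lam n)))) -
          ((1 - lam (n + 1)) • T (v (lam (n + 1))) + lam (n + 1) • G (T (v (lam (n + 1)))))) +
          (lam n - lam (n + 1)) • (G (T (v (lam n))) - T (v (lam n))) := by
          rw [← hvE (n + 1)]
          conv_lhs => rw [hvE n]
          module
        have h3 : ‖v (lam n) - v (lam (n + 1))‖ ≤
            (1 - lam (n + 1) * (1 - τ)) * ‖v (lam n) - v (lam (n + 1))‖ +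
              |lam n - lam (n + 1)| * d := by
          conv_lhs => rw [e]
          refine (norm_add_le _ _).trans (add_le_add (hcontr _ _ (hvC _) _ (hvC _)) ?_)
          rw [norm_smul, Real.norm_eq_abs]
          exact mul_le_mul_of_nonneg_left
            (hbd _ (hGm (hTm (hvC n))) _ (hTm (hvC n))) (abs_nonneg _)
        linarith
      have h4 : |lam n - lam (n + 1)| ≤ (1 - τ) ^ 2 * ε / (6 * (d : ℝ)) * lam (n + 1) ^ 2 := by
        have := hφ₂' n hn
        rwa [div_le_iff₀ (pow_pos hl.1 2)] at this
      have h5 : ‖v (lam n) - v (lam (n + 1))‖ ≤ lam (n + 1) * (1 - τ) * (ε / 6) := by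
        have h6 := mul_le_mul_of_nonneg_right h4 (by linarith : (0 : ℝ) ≤ d)
        have e6 : (1 - τ) ^ 2 * ε / (6 * (d : ℝ)) * lam (n + 1) ^ 2 * d =
          lam (n + 1) * (1 - τ) * (lam (n + 1) * (1 - τ) * (ε / 6)) := by
          field_simp
        rw [e6] at h6
        exact le_of_mul_le_mul_left (h2.trans h6) (mul_pos hl.1 h1τ)
      have h7 : ‖u n - v (lam (n + 1))‖ ≤ ‖u n - v (lam n)‖ + lam (n + 1) * (1 - τ) * (ε / 6) := by
        have e : u n - v (lam (n + 1)) = (u n - v (lam n)) + (v (lam n) - v (lam (n + 1))) := by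
          abel
        rw [e]
        exact (norm_add_le _ _).trans (by linarith)
      have ha1 : 0 ≤ 1 - lam (n + 1) * (1 - τ) := by nlinarith [hl.1, hl.2]
      have h8 := mul_le_mul_of_nonneg_left h7 ha1
      have h9 : 0 ≤ lam (n + 1) * (1 - τ) * (lam (n + 1) * (1 - τ) * (ε / 6)) := by
        have := hl.1
        positivity
      show ‖u (n + 1) - v (lam (n + 1))‖ ≤ (1 - lam (n + 1) * (1 - τ)) * ‖u n - v (lam n)‖ +
        lam (n + 1) * (1 - τ) * (ε / 6)
      nlinarith
    · have e : (d : ℝ) / (ε / 6) = 6 * (d : ℝ) / ε := by field_simp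
      rw [e]; exact hφ₁'
  -- metastability of the path
  generalize hgc : (fun m => m + c + g (m + c)) = gc
  have hgc' : ∀ m, gc m = m + c + g (m + c) := fun m => by rw [← hgc]
  set e := ε / 6 with he
  have he0 : 0 < e := by positivity
  have he1 : e ≤ 1 := by linarith
  obtain ⟨εt, hεt⟩ : ∃ εt, εt = (1 - τ) ^ 2 / (6 + 8 * (d : ℝ)) *
    (((1 - τ) * (e / 2) ^ 2 / 2) ^ 2 / (2 * (d : ℝ) ^ 2)) := ⟨_, rfl⟩
  obtain ⟨hεt0, hεte, hNn⟩ := aux_arith d hd τ e εt hτ0 hτ1 he0 he1 hεt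
  set f := fXi e τ gc χ h d with hf
  have hXi : XiDef e gc χ h d τ = χ (d * Kdef d τ εt f) := by
    rw [XiDef, KXi, hεt]
  rw [hXi]
  obtain ⟨i0, hi0⟩ : ∃ i0, i0 = sInf {i : ℕ | τ ^ (i + 1) ≤ εt / (6 * (d : ℝ) ^ 2)} := ⟨_, rfl⟩
  have hi0' : τ ^ (i0 + 1) ≤ εt / (6 * (d : ℝ) ^ 2) := by
    have hne' : {i : ℕ | τ ^ (i + 1) ≤ εt / (6 * (d : ℝ) ^ 2)}.Nonempty := by
      obtain ⟨n, hn⟩ := exists_pow_lt_of_lt_one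
        (by positivity : 0 < εt / (6 * (d : ℝ) ^ 2)) hτ1
      refine ⟨n, ?_⟩
      exact (pow_le_pow_of_le_one hτ0 hτ1.le (Nat.le_succ n)).trans hn.le
    have := Nat.sInf_mem hne'
    rw [← hi0] at this
    exact this
  set η := (1 - τ) * e / 2 with hη
  have hη0 : 0 < η := by positivity
  set N := ⌈(d : ℝ) ^ 2 / η ^ 2⌉₊ with hN
  have hN1 : 1 ≤ N := Nat.ceil_pos.2 (by positivity)
  have hNη : (d : ℝ) ^ 2 ≤ N * η ^ 2 := by
    rw [← div_le_iff₀ (by positivity)]; exact Nat.le_ceil _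
  have hK : (ftilde d f)^[N ^ (i0 + 1)] 1 ≤ Kdef d τ εt f := by
    rw [Kdef, ← hi0]
    exact aux_kSeq d hd _ N hN1 hNn f i0
  generalize Kdef d τ εt f = K at hK ⊢
  obtain ⟨k, hk1, hFk, w, hw, hwv⟩ := aux_nested d C hne hcl hcv hbd T hTm hT τ hτ0 G hGm hG v
    (fun t h1 h2 => (hv t h1 h2).1) (fun t h1 h2 => (hv t h1 h2).2) η hη0 N hN1 hNη
    (fun j => τ ^ j * d + e / 2 * (1 - τ ^ j)) (by simp)
    (by intro j; rw [hη]; ring) (i0 + 1) (ftilde d f) (aux_ftilde_ge d hd f)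
  have hkK : k ≤ K := (aux_ftilde_ge d hd f k).trans (hFk.trans hK)
  have hkR : (1 : ℝ) ≤ k := by exact_mod_cast hk1
  have hEle : τ ^ (i0 + 1) * d + e / 2 * (1 - τ ^ (i0 + 1)) ≤ e := by
    have h1 : τ ^ (i0 + 1) * d ≤ e / 2 := by
      calc τ ^ (i0 + 1) * d ≤ εt / (6 * (d : ℝ) ^ 2) * d :=
            mul_le_mul_of_nonneg_right hi0' (by linarith)
        _ = εt / (6 * d) := by field_simp
        _ ≤ e / 2 := div_le_div₀ he0.le hεte (by norm_num) (by linarith)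
    have h2 : 0 ≤ τ ^ (i0 + 1) := by positivity
    nlinarith
  set n := min (χ (d * k)) (χ (d * K)) with hn
  have hlamk : ∀ i ≥ n, lam i ≤ 1 / (k : ℝ) := by
    have aux : ∀ m ≥ k, ∀ i ≥ χ (d * m), lam i ≤ 1 / (k : ℝ) := by
      intro m hm i hi
      refine (hχ _ i hi).trans (one_div_le_one_div_of_le (by linarith) ?_)
      have : k ≤ d * m := hm.trans (Nat.le_mul_of_pos_left m hd)
      have : (k : ℝ) ≤ ((d * m : ℕ) : ℝ) := by exact_mod_cast this
      linarith
    intro i hi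
    rcases min_choice (χ (d * k)) (χ (d * K)) with h' | h'
    · exact aux k le_rfl i (by rw [hn, h'] at hi; exact hi)
    · exact aux K hkK i (by rw [hn, h'] at hi; exact hi)
  have hlamF : ∀ i ≤ gc n, 1 / (ftilde d f k : ℝ) ≤ lam i := by
    intro i hi
    refine le_trans ?_ (hlamh i)
    have hhi : (1 : ℝ) ≤ h i := by exact_mod_cast hh i
    refine one_div_le_one_div_of_le (by linarith) ?_
    have b1 : i ≤ fM0 (gTil gc) (χ (d * k)) :=
      (hi.trans (le_max_right n (gc n))).trans (aux_le_fM0 (gTil gc) (min_le_left _ _))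
    have b2 : h i ≤ fM0 h (fM0 (gTil gc) (χ (d * k))) := aux_le_fM0 h b1
    have b3 : (fM0 h (fM0 (gTil gc) (χ (d * k))) : ℝ) ≤ f k := by
      rw [hf, fXi]
      refine le_trans ?_ (Nat.le_ceil _)
      have hden : 0 < (1 - τ) * (e / 2) ^ 2 := by positivity
      have hden1 : (1 - τ) * (e / 2) ^ 2 ≤ 1 :=
        mul_le_one₀ (by linarith) (by positivity) (pow_le_one₀ (by positivity) (by linarith))
      rw [le_div_iff₀ hden]
      have hnn : (0 : ℝ) ≤ (fM0 h (fM0 (gTil gc) (χ (d * k))) : ℝ) := Nat.cast_nonneg _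
      nlinarith
    have b4 : (f k : ℝ) ≤ ftilde d f k := by exact_mod_cast aux_f_le_ftilde d hd f k hk1
    have b5 : (h i : ℝ) ≤ (fM0 h (fM0 (gTil gc) (χ (d * k))) : ℝ) := by exact_mod_cast b2
    linarith
  refine ⟨n + c, Nat.add_le_add_right (min_le_right _ _) c, ?_⟩
  have hfin : ∀ i ∈ Set.Icc (n + c) (n + c + g (n + c)), ‖u i - w‖ ≤ 2 * e + e := by
    rintro i ⟨hi1, hi2⟩
    have q1 := hclose i (by omega)
    have q2 := hwv (lam i) (hlamF i (by rw [hgc']; exact hi2)) (hlamk i (by omega))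
    have e1 : u i - w = (u i - v (lam i)) - (w - v (lam i)) := by abel
    rw [e1]
    exact (norm_sub_le _ _).trans (add_le_add q1 (q2.trans hEle))
  intro i hi j hj
  have q1 := hfin i hi
  have q2 := hfin j hj
  have e1 : u i - u j = (u i - w) - (u j - w) := by abel
  rw [e1]
  refine (norm_sub_le _ _).trans ?_
  linarith
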